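/- Let T = (T_1,…,T_k) ∈ D_f^m(H). Then Δ_{f,T}^m(I) = 0 if and only if (id−Φ_{f_1,T_1}) ∘ ⋯ ∘ (id−Φ_{f_k,T_k})(I) = 0. -/

import Mathlib

open Filter Topology
open scoped InnerProductSpace Topology

noncomputable section

namespace NC

variable {H : Type*} [NormedAddCommGroup H] [InnerProductSpace ℂ H] [CompleteSpace H]

/-- The operator `X_w = X_{j_1} ⋯ X_{j_p}` associated with a word `w ∈ F_d⁺`. -/
def listProd {d : ℕ} (X : Fin d → (H →L[ℂ] H)) (w : List (Fin d)) : H →L[ℂ] H :=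
  (w.map X).prod

/-- `T_{1,β_1} ⋯ T_{k,β_k}` for a `k`-tuple of words `(β_1, …, β_k)`. -/
def tupleWord {k : ℕ} {n : Fin k → ℕ} (T : ∀ i, Fin (n i) → (H →L[ℂ] H))
    (w : ∀ i, List (Fin (n i))) : H →L[ℂ] H :=
  (List.ofFn fun i => listProd (T i) (w i)).prod

/-- the entries of `T_p` commute with the entries of `T_q` for `p ≠ q` -/
def CommutingTuples {k : ℕ} {n : Fin k → ℕ} (T : ∀ i, Fin (n i) → (H →L[ℂ] H)) : Prop :=
  ∀ i j, i ≠ j → ∀ p q, Commute (T i p) (T j q)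

/-- coefficients of a positive regular free holomorphic function in `d` noncommuting
indeterminates:  nonnegative coefficients, zero constant term, nonzero linear
coefficients, and finite radius-type limsup condition. -/
def PosRegCoeffs {d : ℕ} (c : List (Fin d) → ℝ) : Prop :=
  (∀ w, 0 ≤ c w) ∧ c [] = 0 ∧ (∀ j, 0 < c [j]) ∧
    ∃ C : ℝ, ∀ᶠ l : ℕ in atTop,
      (∑ w : Fin l → Fin d, (c (List.ofFn w)) ^ 2) ^ ((1 : ℝ) / (2 * l)) ≤ C

/-- partial sums of `Φ_{f,X}(Y) = Σ_{|w| ≥ 1} c_w X_w Y X_w^*` over words of length `≤ N` -/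
def phiPartial {d : ℕ} (c : List (Fin d) → ℝ) (X : Fin d → (H →L[ℂ] H))
    (Y : H →L[ℂ] H) (N : ℕ) : H →L[ℂ] H :=
  ∑ l ∈ Finset.Icc 1 N, ∑ w : Fin l → Fin d,
    ((c (List.ofFn w) : ℝ) : ℂ) •
      (listProd X (List.ofFn w) * Y * ContinuousLinearMap.adjoint (listProd X (List.ofFn w)))

/-- `Φ` is the map `Φ_{f,X}`, i.e. the WOT limit of the partial sums of
`Σ_{|w| ≥ 1} c_w X_w Y X_w^*`, for every `Y`. -/
def IsPhiMap {d : ℕ} (c : List (Fin d) → ℝ) (X : Fin d → (H →L[ℂ] H))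
    (Φ : Module.End ℂ (H →L[ℂ] H)) : Prop :=
  ∀ (Y : H →L[ℂ] H) (x y : H),
    Tendsto (fun N => ⟪(phiPartial c X Y N) x, y⟫_ℂ) atTop (𝓝 ⟪(Φ Y) x, y⟫_ℂ)

/-- `Δ_Φ^p := (id − Φ_1)^{p_1} ∘ ⋯ ∘ (id − Φ_k)^{p_k}` -/
def Delta {k : ℕ} (Φ : Fin k → Module.End ℂ (H →L[ℂ] H)) (p : Fin k → ℕ) :
    Module.End ℂ (H →L[ℂ] H) :=
  (List.ofFn fun i => (1 - Φ i) ^ (p i)).prod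

/-- `(id − Φ_1^{q_1}) ∘ ⋯ ∘ (id − Φ_k^{q_k})` -/
def DeltaPow {k : ℕ} (Φ : Fin k → Module.End ℂ (H →L[ℂ] H)) (q : Fin k → ℕ) :
    Module.End ℂ (H →L[ℂ] H) :=
  (List.ofFn fun i => 1 - (Φ i) ^ (q i)).prod

/-- membership in the noncommutative polydomain `D_f^m(H)`:  the coordinate tuples
commute with each other, the maps `Φ_{f_i,T_i}` are defined (as WOT limits),
`Φ_{f_i,T_i}(I) ≤ I`, and
`(id−Φ_{f_1,T_1})^{ε_1 m_1} ⋯ (id−Φ_{f_k,T_k})^{ε_k m_k}(I) ≥ 0` for all `ε_i ∈ {0,1}`. -/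
def MemPolydomain {k : ℕ} {n : Fin k → ℕ} (a : ∀ i, List (Fin (n i)) → ℝ)
    (m : Fin k → ℕ) (T : ∀ i, Fin (n i) → (H →L[ℂ] H)) : Prop :=
  CommutingTuples T ∧
  ∃ Φ : Fin k → Module.End ℂ (H →L[ℂ] H),
    (∀ i, IsPhiMap (a i) (T i) (Φ i)) ∧
    (∀ i, ((1 : H →L[ℂ] H) - Φ i 1).IsPositive) ∧
    (∀ ε : Fin k → Bool, ((Delta Φ fun i => if ε i then m i else 0) 1).IsPositive)

/-- purity of a tuple `T`, expressed through its `Φ`-maps: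
`(id−Φ_k^{q_k}) ⋯ (id−Φ_1^{q_1})(I) → I`. -/
def IsPure {k : ℕ} (Φ : Fin k → Module.End ℂ (H →L[ℂ] H)) : Prop :=
  ∀ x : H, Tendsto (fun q : Fin k → ℕ => ((DeltaPow Φ q) 1) x) atTop (𝓝 x)

end NC

namespace NC

/-! Put `φ = Φ_{f_i,T_i}`, a positive map with `φ(I) ≤ I`; then `0 ≤ φ^N(Y) ≤ ‖Y‖ I` for `Y ≥ 0`,
so every orbit of `φ` is bounded. If `(id - φ)²(x) = 0`, then `x - φ^N(x) = N (x - φ(x))`, and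
boundedness forces `x = φ(x)`; hence `id - φ` and all its positive powers have the same kernel.
As the maps `Φ_{f_i,T_i}` commute, kernels can be exchanged factor by factor in the product `Δ`.

`Φ_{f,X}` is defined by a WOT limit, so that it commutes with `Φ_{g,Z}` is not a formal consequence
of the commutation of `X` and `Z`: commuting `Φ_{f,X}` with the partial sums of `Φ_{g,Z}` gives only
`Φ_{g,Z} Φ_{f,X} ≤ Φ_{f,X} Φ_{g,Z}` on positive operators, and equality holds by symmetry. -/

/-- The vectors whose orbit under `φ` is bounded. If this is all of `E`, then `φ` is power bounded
in the pointwise sense; continuity of `φ` is not required. -/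
def boundedOrbits {𝕜 E : Type*} [NormedField 𝕜] [SeminormedAddCommGroup E] [NormedSpace 𝕜 E]
    (φ : Module.End 𝕜 E) : Submodule 𝕜 E where
  carrier := {x | ∃ C : ℝ, ∀ N : ℕ, ‖(φ ^ N) x‖ ≤ C}
  zero_mem' := ⟨0, by simp⟩
  add_mem' := by
    rintro x y ⟨C, hC⟩ ⟨D, hD⟩
    exact ⟨C + D, fun N => (map_add (φ ^ N) x y) ▸ norm_add_le_of_le (hC N) (hD N)⟩
  smul_mem' := by
    rintro c x ⟨C, hC⟩
    refine ⟨‖c‖ * C, fun N => ?_⟩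
    rw [map_smul, norm_smul]
    gcongr
    exact hC N

lemma sub_pow_apply_eq_nsmul {R M : Type*} [Semiring R] [AddCommGroup M] [Module R M]
    {φ : Module.End R M} {x : M} (hx : φ (x - φ x) = x - φ x) (N : ℕ) :
    x - (φ ^ N) x = N • (x - φ x) := by
  induction N with
  | zero => simp
  | succ N ih =>
    calc x - (φ ^ (N + 1)) x = (x - φ x) + φ (x - (φ ^ N) x) := by
          rw [pow_succ', Module.End.mul_apply, map_sub, sub_add_sub_cancel]
      _ = (N + 1) • (x - φ x) := by rw [ih, map_nsmul, hx, succ_nsmul']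

section FixedPoints

variable {𝕜 E : Type*} [RCLike 𝕜] [NormedAddCommGroup E] [NormedSpace 𝕜 E]

lemma apply_eq_self_of_mem_boundedOrbits {φ : Module.End 𝕜 E} {x : E}
    (hx : x ∈ boundedOrbits φ) (hfix : φ (x - φ x) = x - φ x) : φ x = x := by
  obtain ⟨C, hC⟩ := hx
  by_contra hne
  have hpos : 0 < ‖x - φ x‖ := norm_pos_iff.2 (sub_ne_zero.2 (Ne.symm hne))
  obtain ⟨N, hN⟩ := exists_lt_nsmul hpos (‖x‖ + C)
  refine hN.not_ge ?_
  calc N • ‖x - φ x‖ = ‖x - (φ ^ N) x‖ := by rw [sub_pow_apply_eq_nsmul hfix, RCLike.norm_nsmul 𝕜]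
    _ ≤ ‖x‖ + C := norm_sub_le_of_le le_rfl (hC N)

lemma ker_one_sub_pow_of_boundedOrbits_eq_top {φ : Module.End 𝕜 E} (hφ : boundedOrbits φ = ⊤)
    {r : ℕ} (hr : 1 ≤ r) : LinearMap.ker ((1 - φ) ^ r) = LinearMap.ker (1 - φ) := by
  have ker_sq : LinearMap.ker ((1 - φ) ^ 1) = LinearMap.ker ((1 - φ) ^ 2) := by
    refine ((1 - φ).iterateKer.monotone one_le_two).antisymm
      fun x (hx : x ∈ LinearMap.ker ((1 - φ) ^ 2)) => ?_
    have hfix : φ (x - φ x) = x - φ x := by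
      have hsq : x - φ x - φ (x - φ x) = 0 := by
        simpa only [pow_two, LinearMap.mem_ker, Module.End.mul_apply, LinearMap.sub_apply,
          Module.End.one_apply] using hx
      exact (sub_eq_zero.1 hsq).symm
    have hx_fixed : φ x = x :=
      apply_eq_self_of_mem_boundedOrbits (hφ ▸ Submodule.mem_top) hfix
    simp [hx_fixed]
  obtain ⟨s, rfl⟩ := Nat.exists_eq_add_of_le hr
  rw [← Module.End.ker_pow_constant ker_sq, pow_one]

end FixedPoints

lemma boundedOrbits_eq_top_of_monotone {A : Type*} [CStarAlgebra A] [PartialOrder A]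
    [StarOrderedRing A] {φ : Module.End ℂ A} (hφ : Monotone φ) (hone : φ 1 ≤ 1) :
    boundedOrbits φ = ⊤ := by
  rw [← top_le_iff, ← CStarAlgebra.span_nonneg, Submodule.span_le]
  intro b (hb : 0 ≤ b)
  refine ⟨‖‖b‖ • (1 : A)‖, fun N => ?_⟩
  have hmono : Monotone (φ ^ N) := by
    rw [Module.End.coe_pow]
    exact hφ.iterate N
  have pow_apply_one_le : (φ ^ N) 1 ≤ 1 := by
    rw [Module.End.coe_pow]
    exact hφ.antitone_iterate_of_map_le hone N.zero_le
  have hb_le : b ≤ ‖b‖ • (1 : A) := by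
    rw [← Algebra.algebraMap_eq_smul_one]
    exact (IsSelfAdjoint.of_nonneg hb).le_algebraMap_norm_self
  refine CStarAlgebra.norm_le_norm_of_nonneg_of_le (map_zero (φ ^ N) ▸ hmono hb) ?_
  calc (φ ^ N) b ≤ (φ ^ N) (‖b‖ • (1 : A)) := hmono hb_le
    _ = ‖b‖ • (φ ^ N) 1 := LinearMap.map_smul_of_tower _ _ _
    _ ≤ ‖b‖ • (1 : A) := smul_le_smul_of_nonneg_left pow_apply_one_le (norm_nonneg b)

lemma ker_prod_ofFn_congr {R M : Type*} [Semiring R] [AddCommMonoid M] [Module R M] {k : ℕ}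
    {A B : Fin k → Module.End R M} (hker : ∀ i, LinearMap.ker (A i) = LinearMap.ker (B i))
    (hBA : ∀ i j, i < j → Commute (B i) (A j)) (hBB : ∀ i j, i < j → Commute (B i) (B j)) :
    LinearMap.ker (List.ofFn A).prod = LinearMap.ker (List.ofFn B).prod := by
  induction k with
  | zero => simp
  | succ k ih =>
    set P := (List.ofFn fun i : Fin k => A i.succ).prod
    set Q := (List.ofFn fun i : Fin k => B i.succ).prod
    have hPQ : LinearMap.ker P = LinearMap.ker Q :=
      ih (fun i => hker _) (fun i j hij => hBA _ _ (Fin.succ_lt_succ_iff.2 hij))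
        fun i j hij => hBB _ _ (Fin.succ_lt_succ_iff.2 hij)
    have hBP : Commute (B 0) P :=
      .list_prod_right _ _ <| List.forall_mem_ofFn_iff.2 fun j => hBA _ _ j.succ_pos
    have hBQ : Commute (B 0) Q :=
      .list_prod_right _ _ <| List.forall_mem_ofFn_iff.2 fun j => hBB _ _ j.succ_pos
    simp only [List.ofFn_succ, List.prod_cons]
    calc LinearMap.ker (A 0 * P) = LinearMap.ker (B 0 * P) := by
          simp only [Module.End.mul_eq_comp, LinearMap.ker_comp, hker]
      _ = LinearMap.ker (B 0 * Q) := by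
          rw [hBP.eq, hBQ.eq]
          simp only [Module.End.mul_eq_comp, LinearMap.ker_comp, hPQ]

lemma conj_conj_of_commute {R : Type*} [Semigroup R] [StarMul R] {a b : R} (h : Commute a b)
    (y : R) : a * (b * y * star b) * star a = b * (a * y * star a) * star b :=
  calc a * (b * y * star b) * star a = (a * b) * y * star (a * b) := by
        simp only [star_mul, mul_assoc]
    _ = (b * a) * y * star (b * a) := by rw [h.eq]
    _ = b * (a * y * star a) * star b := by simp only [star_mul, mul_assoc]

section PhiMap

variable {H : Type*} [NormedAddCommGroup H] [InnerProductSpace ℂ H]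

open scoped ComplexOrder in
lemma le_of_tendsto_inner_self {ι : Type*} {l : Filter ι} [l.NeBot] {S T : ι → (H →L[ℂ] H)}
    {A B : H →L[ℂ] H} (hST : ∀ᶠ i in l, S i ≤ T i)
    (hS : ∀ x, Tendsto (fun i => ⟪S i x, x⟫_ℂ) l (𝓝 ⟪A x, x⟫_ℂ))
    (hT : ∀ x, Tendsto (fun i => ⟪T i x, x⟫_ℂ) l (𝓝 ⟪B x, x⟫_ℂ)) : A ≤ B := by
  rw [ContinuousLinearMap.le_def, ContinuousLinearMap.isPositive_iff_complex]
  intro x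
  have hAB : ⟪A x, x⟫_ℂ ≤ ⟪B x, x⟫_ℂ := by
    refine le_of_tendsto_of_tendsto (hS x) (hT x) ?_
    filter_upwards [hST] with i hi
    simpa [inner_sub_left] using
      ((ContinuousLinearMap.le_def _ _).1 hi).inner_nonneg_left x
  have hsub : 0 ≤ ⟪(B - A) x, x⟫_ℂ := by
    simpa [inner_sub_left] using hAB
  obtain ⟨hre, him⟩ := Complex.nonneg_iff.1 hsub
  exact ⟨Complex.ext rfl him, hre⟩

variable {d e : ℕ} {c : List (Fin d) → ℝ} {b : List (Fin e) → ℝ}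
  {X : Fin d → (H →L[ℂ] H)} {Z : Fin e → (H →L[ℂ] H)} {B Y : H →L[ℂ] H}

lemma commute_listProd (hB : ∀ p, Commute B (X p)) (w : List (Fin d)) :
    Commute B (listProd X w) :=
  .list_prod_right _ _ <| List.forall_mem_map.2 fun p _ => hB p

variable [CompleteSpace H] {Φ Ψ : Module.End ℂ (H →L[ℂ] H)}

lemma phiPartial_mono (hc : ∀ w, 0 ≤ c w) (hY : 0 ≤ Y) : Monotone (phiPartial c X Y) := by
  have term_nonneg (w : List (Fin d)) :
      0 ≤ (c w : ℂ) • (listProd X w * Y * ContinuousLinearMap.adjoint (listProd X w)) := by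
    rw [ContinuousLinearMap.nonneg_iff_isPositive] at hY ⊢
    exact (hY.conj_adjoint (listProd X w)).smul_of_nonneg (by exact_mod_cast hc w)
  intro N M hNM
  exact Finset.sum_le_sum_of_subset_of_nonneg (Finset.Icc_subset_Icc_right hNM)
    fun l _ _ => Finset.sum_nonneg fun w _ => term_nonneg _

lemma phiPartial_conj (hB : ∀ p, Commute B (X p)) (Y : H →L[ℂ] H) (N : ℕ) :
    phiPartial c X (B * Y * ContinuousLinearMap.adjoint B) N =
      B * phiPartial c X Y N * ContinuousLinearMap.adjoint B := by
  simp only [phiPartial, Finset.mul_sum, Finset.sum_mul, mul_smul_comm, smul_mul_assoc,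
    ← ContinuousLinearMap.star_eq_adjoint]
  refine Finset.sum_congr rfl fun l _ => Finset.sum_congr rfl fun w _ => ?_
  rw [conj_conj_of_commute (commute_listProd hB _).symm]

namespace IsPhiMap

lemma phiPartial_le (hΦ : IsPhiMap c X Φ) (hc : ∀ w, 0 ≤ c w) (hY : 0 ≤ Y) (N : ℕ) :
    phiPartial c X Y N ≤ Φ Y :=
  le_of_tendsto_inner_self ((eventually_ge_atTop N).mono fun _ hM => phiPartial_mono hc hY hM)
    (fun _ => tendsto_const_nhds) fun x => hΦ Y x x

lemma monotone (hΦ : IsPhiMap c X Φ) (hc : ∀ w, 0 ≤ c w) : Monotone Φ :=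
  (monotone_iff_map_nonneg Φ).2 fun Y hY => by
    simpa [phiPartial] using hΦ.phiPartial_le hc hY 0

lemma map_conj (hΦ : IsPhiMap c X Φ) (hB : ∀ p, Commute B (X p)) (Y : H →L[ℂ] H) :
    Φ (B * Y * ContinuousLinearMap.adjoint B) = B * Φ Y * ContinuousLinearMap.adjoint B := by
  refine ContinuousLinearMap.ext fun x => ext_inner_right ℂ fun y => ?_
  refine tendsto_nhds_unique (hΦ _ x y) ?_
  simp only [phiPartial_conj hB, mul_apply_eq_comp, ← ContinuousLinearMap.adjoint_inner_right B]
  exact hΦ Y _ _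

lemma map_phiPartial (hΦ : IsPhiMap c X Φ) (hXZ : ∀ p q, Commute (X p) (Z q)) (Y : H →L[ℂ] H)
    (N : ℕ) : Φ (phiPartial b Z Y N) = phiPartial b Z (Φ Y) N := by
  simp only [phiPartial, map_sum, map_smul]
  refine Finset.sum_congr rfl fun l _ => Finset.sum_congr rfl fun w _ => ?_
  rw [hΦ.map_conj fun p => (commute_listProd (hXZ p) _).symm]

lemma apply_apply_le (hΦ : IsPhiMap c X Φ) (hc : ∀ w, 0 ≤ c w) (hΨ : IsPhiMap b Z Ψ)
    (hb : ∀ w, 0 ≤ b w) (hXZ : ∀ p q, Commute (X p) (Z q)) (hY : 0 ≤ Y) :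
    Ψ (Φ Y) ≤ Φ (Ψ Y) := by
  have partial_le (N : ℕ) : phiPartial b Z (Φ Y) N ≤ Φ (Ψ Y) :=
    hΦ.map_phiPartial hXZ Y N ▸ hΦ.monotone hc (hΨ.phiPartial_le hb hY N)
  exact le_of_tendsto_inner_self (.of_forall partial_le) (fun x => hΨ (Φ Y) x x)
    fun _ => tendsto_const_nhds

lemma commute (hΦ : IsPhiMap c X Φ) (hc : ∀ w, 0 ≤ c w) (hΨ : IsPhiMap b Z Ψ)
    (hb : ∀ w, 0 ≤ b w) (hXZ : ∀ p q, Commute (X p) (Z q)) : Commute Φ Ψ :=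
  LinearMap.ext_on CStarAlgebra.span_nonneg fun _ hY => le_antisymm
    (hΨ.apply_apply_le hb hΦ hc (fun q p => (hXZ p q).symm) hY)
    (hΦ.apply_apply_le hc hΨ hb hXZ hY)

end IsPhiMap

end PhiMap

theorem stmt_6_general {H : Type*} [NormedAddCommGroup H] [InnerProductSpace ℂ H]
    [CompleteSpace H] {k : ℕ} {n : Fin k → ℕ} {m : Fin k → ℕ} (hm : ∀ i, 1 ≤ m i)
    {a : ∀ i, List (Fin (n i)) → ℝ} (ha : ∀ i w, 0 ≤ a i w)
    {T : ∀ i, Fin (n i) → (H →L[ℂ] H)} (hT : CommutingTuples T)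
    {Φ : Fin k → Module.End ℂ (H →L[ℂ] H)} (hΦ : ∀ i, IsPhiMap (a i) (T i) (Φ i))
    (hcontr : ∀ i, Φ i 1 ≤ 1) :
    LinearMap.ker (Delta Φ m) = LinearMap.ker (Delta Φ fun _ => 1) := by
  have hcomm (i j : Fin k) (hij : i < j) : Commute (1 - Φ i) (1 - Φ j) :=
    have hΦij := (hΦ i).commute (ha i) (hΦ j) (ha j) (hT i j hij.ne)
    (Commute.one_left _).sub_left ((Commute.one_right _).sub_right hΦij)
  have hbounded (i : Fin k) : boundedOrbits (Φ i) = ⊤ :=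
    boundedOrbits_eq_top_of_monotone ((hΦ i).monotone (ha i)) (hcontr i)
  refine ker_prod_ofFn_congr (fun i => ?_) (fun i j hij => (hcomm i j hij).pow_pow _ _)
    fun i j hij => (hcomm i j hij).pow_pow _ _
  rw [pow_one, ker_one_sub_pow_of_boundedOrbits_eq_top (hbounded i) (hm i)]

/-- **Proposition 1.7(iv) (Popescu).**  If `T = (T_1, …, T_k) ∈ D_f^m(H)`, then
`Δ_{f,T}^m(I) = 0` if and only if
`(id−Φ_{f_1,T_1}) ∘ ⋯ ∘ (id−Φ_{f_k,T_k})(I) = 0`. -/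
theorem stmt_6 {H : Type*} [NormedAddCommGroup H] [InnerProductSpace ℂ H] [CompleteSpace H]
    {k : ℕ} {n : Fin k → ℕ} (hn : ∀ i, 1 ≤ n i) {m : Fin k → ℕ} (hm : ∀ i, 1 ≤ m i)
    (a : ∀ i, List (Fin (n i)) → ℝ) (ha : ∀ i, PosRegCoeffs (a i))
    (T : ∀ i, Fin (n i) → (H →L[ℂ] H)) (hT : CommutingTuples T)
    (Φ : Fin k → Module.End ℂ (H →L[ℂ] H))
    (hΦ : ∀ i, IsPhiMap (a i) (T i) (Φ i))
    (hcontr : ∀ i, ((1 : H →L[ℂ] H) - Φ i 1).IsPositive)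
    (hmem : ∀ ε : Fin k → Bool, ((Delta Φ fun i => if ε i then m i else 0) 1).IsPositive) :
    (Delta Φ m) 1 = 0 ↔ (Delta Φ fun _ => 1) 1 = 0 :=
  SetLike.ext_iff.1 (stmt_6_general hm (fun i => (ha i).1) hT hΦ hcontr) 1

end NC
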